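/- Let R be a semiartinian von Neumann regular ring with primitive factors artinian, with right socle sequence (S_α | α ≤ σ+1). If σ is a countable ordinal and each proper layer L_α (0 < α < σ) is countably generated, then R is left and right hereditary. -/

import Mathlib

universe u

open Submodule Function

/-- The socle of a module: the supremum of all simple submodules. -/
def moduleSocle (R : Type*) (M : Type*) [Ring R] [AddCommGroup M] [Module R M] :
    Submodule R M :=
  sSup {W : Submodule R M | IsSimpleModule R ↥W}

/-- A ring is right semiartinian if every nonzero quotient of the right module `R_R`
has a nonzero socle. -/
def IsRightSemiartinian (R : Type u) [Ring R] : Prop :=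
  ∀ I : Submodule Rᵐᵒᵖ R, I ≠ ⊤ → moduleSocle Rᵐᵒᵖ (R ⧸ I) ≠ ⊥

/-- The right socle sequence of a ring: `S_0 = 0`, `S_{α+1}/S_α = Soc(R/S_α)`,
and unions at limits. -/
noncomputable def socleSeq (R : Type u) [Ring R] : Ordinal.{u} → Submodule Rᵐᵒᵖ R :=
  fun o => Ordinal.limitRecOn o ⊥
    (fun _ S => Submodule.comap S.mkQ (moduleSocle Rᵐᵒᵖ (R ⧸ S)))
    (fun o _ ih => ⨆ (β : Ordinal.{u}) (h : β < o), ih β h)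

/-- `S_α`, viewed as a submodule of `S_{α+1}`; the kernel of the `α`-th layer
epimorphism `π_α : S_{α+1} → S_{α+1}/S_α`. -/
noncomputable def layerKer (R : Type u) [Ring R] (α : Ordinal.{u}) :
    Submodule Rᵐᵒᵖ ↥(socleSeq R (α + 1)) :=
  (socleSeq R α).comap (socleSeq R (α + 1)).subtype

/-- The `α`-th layer `L_α = S_{α+1}/S_α` of a ring. -/
noncomputable abbrev Layer (R : Type u) [Ring R] (α : Ordinal.{u}) :=
  ↥(socleSeq R (α + 1)) ⧸ layerKer R α

/-- A module `M` is weakly `R`-projective if for each `0 < α ≤ σ`, every homomorphism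
`f : M → L_α` with finitely generated image factors through the `α`-th layer
epimorphism `π_α : S_{α+1} → L_α`. -/
def WeaklyRProjective (R : Type u) [Ring R] (σ : Ordinal.{u})
    (M : Type u) [AddCommGroup M] [Module Rᵐᵒᵖ M] : Prop :=
  ∀ α : Ordinal.{u}, 0 < α → α ≤ σ →
    ∀ f : M →ₗ[Rᵐᵒᵖ] Layer R α, (LinearMap.range f).FG →
      ∃ g : M →ₗ[Rᵐᵒᵖ] ↥(socleSeq R (α + 1)), (layerKer R α).mkQ ∘ₗ g = f

/-- A ring is von Neumann regular if each `r` admits `s` with `r * s * r = r`. -/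
def IsVNRegular (R : Type u) [Ring R] : Prop :=
  ∀ r : R, ∃ s : R, r * s * r = r

/-- The annihilator of a right `R`-module, as a submodule of the right module `R_R`. -/
def rightAnnihilator (R : Type u) [Ring R] (M : Type u) [AddCommGroup M]
    [Module Rᵐᵒᵖ M] : Submodule Rᵐᵒᵖ R where
  carrier := {r : R | ∀ m : M, MulOpposite.op r • m = 0}
  add_mem' := by
    intro a b ha hb m
    rw [MulOpposite.op_add, add_smul, ha m, hb m, add_zero]
  zero_mem' := by
    intro m
    rw [MulOpposite.op_zero, zero_smul]
  smul_mem' := by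
    intro c r hr m
    have h : MulOpposite.op (c • r) = c * MulOpposite.op r := by
      rw [MulOpposite.smul_eq_mul_unop, MulOpposite.op_mul, MulOpposite.op_unop]
    rw [h, mul_smul, hr m, smul_zero]

/-- A ring has (right) primitive factors artinian if, for each right primitive
(two-sided) ideal `P`, i.e. the annihilator of a simple right module, the factor
`R/P` is (right) artinian. -/
def HasPFA (R : Type u) [Ring R] : Prop :=
  ∀ (M : Type u) [AddCommGroup M] [Module Rᵐᵒᵖ M], IsSimpleModule Rᵐᵒᵖ M →
    IsArtinian Rᵐᵒᵖ (R ⧸ rightAnnihilator R M)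

/-!
Over a von Neumann regular ring every element `x` of either regular module is of the form
`φ x • x` for some functional `φ`. This passes to submodules, and it yields a dual basis for every
submodule that is countably generated or semisimple. To see that a right ideal `I` is projective,
intersect it with the socle sequence: each section of `I` above the bottom one is a submodule of a
countably generated semisimple module, hence countably generated, so `I` is the sum of
`I ∩ S_1` and a countably generated ideal, and a semisimple complement makes this sum direct.

The same argument runs on the left, because the two-sided ideals `S_α` filter `R` by left ideals
with semisimple sections as well, and these sections stay countably generated: if `x` generates a
simple right submodule of `R / S_α` with annihilator `P`, then `R / P` is semisimple artinian,
hence left noetherian, and `RxR ∩ P ⊆ S_α` by regularity, so `RxR` is finitely generated as a left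
ideal modulo `S_α`.
-/

universe v

section RegularModules

variable {A M : Type*} [Ring A] [AddCommGroup M] [Module A M]

/-- A module is *regular* in the sense of Zelmanowitz if every element `x` is fixed by
`φ x • ·` for some functional `φ`. Both regular modules `R_R` and `_R R` of a von Neumann regular
ring have this property, and unlike von Neumann regularity it passes to submodules. -/
def IsZelmanowitzRegular (A M : Type*) [Ring A] [AddCommGroup M] [Module A M] : Prop :=
  ∀ x : M, ∃ φ : M →ₗ[A] A, φ x • x = x

/-- A submodule is countably generated if it is the span of a countable set; the countable
analogue of `Submodule.FG`. -/
def IsCountablyGenerated (N : Submodule A M) : Prop :=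
  ∃ s : Set M, s.Countable ∧ span A s = N

lemma projective_of_dualBasis {ι : Type*} (x : ι → M) (ψ : ι → M →ₗ[A] A)
    (hfin : ∀ m, (support fun i ↦ ψ i m).Finite) (hsum : ∀ m, ∑ᶠ i, ψ i m • x i = m) :
    Module.Projective A M := by
  let s : M →ₗ[A] ι →₀ A :=
    { toFun m := Finsupp.ofSupportFinite (fun i ↦ ψ i m) (hfin m)
      map_add' a b := Finsupp.ext fun i ↦ map_add (ψ i) a b
      map_smul' a b := Finsupp.ext fun i ↦ map_smul (ψ i) a b }
  refine .of_split s (Finsupp.linearCombination A x) (LinearMap.ext fun m ↦ ?_)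
  have hsupp : (support fun i ↦ ψ i m • x i) ⊆ (s m).support := fun i hi ↦
    Finsupp.mem_support_iff.mpr fun h ↦ hi (by simp [show ψ i m = 0 from h])
  exact (finsum_eq_sum_of_support_subset _ hsupp).symm.trans (hsum m)

lemma projective_sup_of_disjoint {U V : Submodule A M} (h : Disjoint U V)
    [Module.Projective A U] [Module.Projective A V] : Module.Projective A ↥(U ⊔ V) := by
  have hinj : Injective (U.subtype.coprod V.subtype) := by
    rw [← LinearMap.ker_eq_bot, LinearMap.ker_coprod_of_disjoint_range _ _ (by simpa using h)]
    simp
  have hrange : LinearMap.range (U.subtype.coprod V.subtype) = U ⊔ V := by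
    simp [LinearMap.range_coprod]
  exact .of_equiv ((LinearEquiv.ofInjective _ hinj).trans (LinearEquiv.ofEq _ _ hrange))

namespace IsCountablyGenerated

variable {N L : Submodule A M}

lemma of_fg (h : N.FG) : IsCountablyGenerated N :=
  let ⟨s, hs⟩ := h
  ⟨s, s.countable_toSet, hs⟩

lemma map {M' : Type*} [AddCommGroup M'] [Module A M'] (h : IsCountablyGenerated N)
    (f : M →ₗ[A] M') : IsCountablyGenerated (N.map f) :=
  let ⟨s, hs, hsN⟩ := h
  ⟨f '' s, hs.image f, by rw [span_image, hsN]⟩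

lemma iSup {ι : Type*} [Countable ι] {N : ι → Submodule A M}
    (h : ∀ i, IsCountablyGenerated (N i)) : IsCountablyGenerated (⨆ i, N i) := by
  choose s hs hsN using h
  exact ⟨⋃ i, s i, Set.countable_iUnion hs, by simp only [span_iUnion, hsN]⟩

lemma top (h : IsCountablyGenerated N) : IsCountablyGenerated (⊤ : Submodule A N) := by
  obtain ⟨s, hs, rfl⟩ := h
  exact ⟨(↑) ⁻¹' s, hs.preimage Subtype.val_injective, span_span_coe_preimage⟩

lemma exists_le_map_eq {M' : Type*} [AddCommGroup M'] [Module A M'] {f : M →ₗ[A] M'}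
    (h : IsCountablyGenerated (L.map f)) :
    ∃ J ≤ L, IsCountablyGenerated J ∧ J.map f = L.map f := by
  obtain ⟨s, hs, hsL⟩ := h
  have hsub : s ⊆ f '' L := subset_span.trans hsL.le
  obtain ⟨t, htL, ht⟩ := Set.SurjOn.exists_bijOn_subset hsub
  refine ⟨span A t, span_le.mpr htL, ⟨t, ?_, rfl⟩, by rw [map_span, ht.image_eq, hsL]⟩
  exact Set.countable_of_injective_of_countable_image ht.injOn (ht.image_eq.symm ▸ hs)

lemma exists_subset_le_span {D : Set M} (h : IsCountablyGenerated N) (hND : N ≤ span A D) :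
    ∃ T ⊆ D, T.Countable ∧ N ≤ span A T := by
  obtain ⟨s, hs, rfl⟩ := h
  have hfin (x : s) : ∃ F : Finset M, (F : Set M) ⊆ D ∧ (x : M) ∈ span A (F : Set M) :=
    mem_span_finite_of_mem_span (hND (subset_span x.2))
  choose F hFD hxF using hfin
  have := hs.to_subtype
  refine ⟨⋃ x, (F x : Set M), Set.iUnion_subset hFD,
    Set.countable_iUnion fun x ↦ (F x).countable_toSet, span_le.mpr fun x hx ↦ ?_⟩
  exact span_mono (Set.subset_iUnion (fun x : s ↦ (F x : Set M)) ⟨x, hx⟩) (hxF ⟨x, hx⟩)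

lemma exists_subset_sup_span_eq {D : Set M} (h : IsCountablyGenerated ((span A D).map N.mkQ)) :
    ∃ T ⊆ D, T.Countable ∧ N ⊔ span A T = N ⊔ span A D := by
  obtain ⟨J, hJD, hJ, hmap⟩ := h.exists_le_map_eq
  obtain ⟨T, hTD, hT, hJT⟩ := hJ.exists_subset_le_span hJD
  refine ⟨T, hTD, hT, le_antisymm (sup_le_sup_left (span_mono hTD) N) ?_⟩
  calc N ⊔ span A D = N ⊔ J := by rw [← comap_map_mkQ, ← hmap, comap_map_mkQ]
    _ ≤ N ⊔ span A T := sup_le_sup_left hJT N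

lemma of_le_of_isSemisimpleModule (h : IsCountablyGenerated N) [IsSemisimpleModule A N]
    (hLN : L ≤ N) : IsCountablyGenerated L := by
  obtain ⟨p, hp⟩ := IsSemisimpleModule.extension_property (inclusion hLN)
    (inclusion_injective hLN) .id
  have hsurj : Surjective p := fun x ↦ ⟨inclusion hLN x, LinearMap.congr_fun hp x⟩
  have hrange : (⊤ : Submodule A N).map (L.subtype ∘ₗ p) = L := by
    rw [Submodule.map_top, LinearMap.range_comp, LinearMap.range_eq_top.mpr hsurj,
      Submodule.map_top, range_subtype]
  exact hrange ▸ h.top.map _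

end IsCountablyGenerated

namespace IsZelmanowitzRegular

lemma submodule (h : IsZelmanowitzRegular A M) (N : Submodule A M) : IsZelmanowitzRegular A N :=
  fun x ↦ let ⟨φ, hφ⟩ := h x
  ⟨φ ∘ₗ N.subtype, Subtype.ext hφ⟩

section DualBasis

variable (φ : M → M →ₗ[A] A) (c : ℕ → M)

/-- The recursively built endomorphisms `pₙ` that retract `M` onto the span of
`c 0, …, c (n - 1)` when `φ` witnesses regularity: `pₙ₊₁` adds to `pₙ` a rank-one map
with values in the span of the residue `c n - pₙ (c n)`. -/
noncomputable def retraction : ℕ → M →ₗ[A] M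
  | 0 => 0
  | n + 1 => retraction n +
      (φ (c n - retraction n (c n)) ∘ₗ (.id - retraction n)).smulRight (c n - retraction n (c n))

/-- The part of `c n` not captured by the earlier generators; the `n`-th member of the dual
basis extracted from `c`. -/
noncomputable def residue (n : ℕ) : M := c n - retraction φ c n (c n)

/-- The functional dual to `residue φ c n`. -/
noncomputable def coordinate (n : ℕ) : M →ₗ[A] A :=
  φ (residue φ c n) ∘ₗ (.id - retraction φ c n)

lemma retraction_succ_apply (n : ℕ) (m : M) : retraction φ c (n + 1) m =
    retraction φ c n m + coordinate φ c n m • residue φ c n := rfl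

lemma retraction_apply_eq_sum (n : ℕ) (m : M) :
    retraction φ c n m = ∑ i ∈ Finset.range n, coordinate φ c i m • residue φ c i := by
  induction n with
  | zero => rfl
  | succ n ih => rw [Finset.sum_range_succ, ← ih, retraction_succ_apply]

variable {φ c}

lemma coordinate_eq_zero {n : ℕ} {m : M} (h : retraction φ c n m = m) :
    coordinate φ c n m = 0 := by
  simp [coordinate, h]

lemma retraction_apply_generator (hφ : ∀ x, φ x x • x = x) {i n : ℕ} (hin : i < n) :
    retraction φ c n (c i) = c i := by
  induction n, hin using Nat.le_induction with
  | base =>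
    have hcoord : coordinate φ c i (c i) • residue φ c i = residue φ c i := hφ (residue φ c i)
    rw [Nat.succ_eq_add_one, retraction_succ_apply, hcoord, residue, add_sub_cancel]
  | succ n _ ih => rw [retraction_succ_apply, coordinate_eq_zero ih, zero_smul, add_zero, ih]

lemma eventually_retraction_apply_eq (hφ : ∀ x, φ x x • x = x) {m : M}
    (hm : m ∈ span A (Set.range c)) : ∀ᶠ n in Filter.atTop, retraction φ c n m = m := by
  induction hm using span_induction with
  | mem x hx =>
    obtain ⟨i, rfl⟩ := hx
    exact (Filter.eventually_gt_atTop i).mono fun n ↦ retraction_apply_generator hφ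
  | zero => simp
  | add x y _ _ hx hy => filter_upwards [hx, hy] with n hxn hyn using by rw [map_add, hxn, hyn]
  | smul a x _ hx => filter_upwards [hx] with n hxn using by rw [map_smul, hxn]

end DualBasis

lemma projective_of_span_range_eq_top (h : IsZelmanowitzRegular A M) {c : ℕ → M}
    (hc : span A (Set.range c) = ⊤) : Module.Projective A M := by
  choose φ hφ using h
  have hev (m : M) : ∃ n, ∀ i ≥ n, retraction φ c i m = m :=
    Filter.eventually_atTop.mp (eventually_retraction_apply_eq hφ (hc ▸ mem_top))
  have hsupp {m : M} {n : ℕ} (hn : ∀ i ≥ n, retraction φ c i m = m) :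
      (support fun i ↦ coordinate φ c i m) ⊆ Finset.range n := fun i hi ↦ by
    by_contra hin
    exact hi (coordinate_eq_zero (hn i (by simpa using hin)))
  refine projective_of_dualBasis (residue φ c) (coordinate φ c) (fun m ↦ ?_) fun m ↦ ?_
  · obtain ⟨n, hn⟩ := hev m
    exact (Finset.finite_toSet _).subset (hsupp hn)
  · obtain ⟨n, hn⟩ := hev m
    have hterms : (support fun i ↦ coordinate φ c i m • residue φ c i) ⊆ Finset.range n :=
      (support_smul_subset_left _ _).trans (hsupp hn)
    rw [finsum_eq_sum_of_support_subset _ hterms, ← retraction_apply_eq_sum, hn n le_rfl]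

lemma projective_of_isCountablyGenerated (h : IsZelmanowitzRegular A M) {N : Submodule A M}
    (hN : IsCountablyGenerated N) : Module.Projective A N := by
  obtain ⟨s, hs, hspan⟩ := hN.top
  obtain ⟨c, hc⟩ := (hs.insert 0).exists_eq_range (Set.insert_nonempty 0 s)
  exact (h.submodule N).projective_of_span_range_eq_top (c := c)
    (by rw [← hc, span_insert_zero, hspan])

lemma projective_of_isSemisimpleModule (h : IsZelmanowitzRegular A M) [IsSemisimpleModule A M] :
    Module.Projective A M := by
  obtain ⟨s, e, -, hs⟩ := IsSemisimpleModule.exists_linearEquiv_dfinsupp A M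
  have (S : s) : Module.Projective A S.1 :=
    have := hs S
    h.projective_of_isCountablyGenerated (.of_fg (Module.Finite.iff_fg.mp inferInstance))
  exact .of_equiv e.symm

end IsZelmanowitzRegular

lemma isSemisimpleModule_moduleSocle : IsSemisimpleModule A (moduleSocle A M) := by
  rw [moduleSocle, sSup_eq_iSup]
  exact isSemisimpleModule_biSup_of_isSemisimpleModule_submodule fun W (hW : IsSimpleModule A W) ↦
    inferInstance

lemma isSemisimpleModule_of_le {U V : Submodule A M} [IsSemisimpleModule A V] (h : U ≤ V) :
    IsSemisimpleModule A U :=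
  .of_injective (inclusion h) (inclusion_injective h)

lemma le_moduleSocle (U : Submodule A M) [IsSemisimpleModule A U] : U ≤ moduleSocle A M := by
  have hU : ⨆ W ∈ {W : Submodule A U | IsSimpleModule A W}, W.map U.subtype = U := by
    simp_rw [← Submodule.map_iSup]
    rw [← sSup_eq_iSup, IsSemisimpleModule.sSup_simples_eq_top, map_subtype_top]
  refine hU.symm.trans_le (iSup₂_le fun W (hW : IsSimpleModule A W) ↦ le_sSup ?_)
  exact .congr (equivMapOfInjective _ U.subtype_injective W).symm

lemma moduleSocle_le_comap {M' : Type*} [AddCommGroup M'] [Module A M'] (f : M →ₗ[A] M') :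
    moduleSocle A M ≤ (moduleSocle A M').comap f := by
  have := isSemisimpleModule_moduleSocle (A := A) (M := M)
  have : IsSemisimpleModule A ((moduleSocle A M).map f) :=
    .of_surjective (f.submoduleMap (moduleSocle A M)) (f.submoduleMap_surjective _)
  exact map_le_iff_le_comap.mp (le_moduleSocle _)

lemma mem_moduleSocle_of_forall_mem_span {y : M} (h : ∀ a : A, a • y ≠ 0 → y ∈ A ∙ (a • y)) :
    y ∈ moduleSocle A M := by
  rcases eq_or_ne y 0 with rfl | hy
  · exact zero_mem _
  have : IsSimpleModule A (A ∙ y) := by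
    refine isSimpleModule_iff_isAtom.mpr ⟨by simpa using hy, fun V hV ↦ ?_⟩
    by_contra hV0
    obtain ⟨v, hvV, hv0⟩ := V.ne_bot_iff.mp hV0
    obtain ⟨a, rfl⟩ := mem_span_singleton.mp (hV.le hvV)
    have hyV : y ∈ V := (span_singleton_le_iff_mem _ _).mpr hvV (h a hv0)
    exact hV.not_ge ((span_singleton_le_iff_mem _ _).mpr hyV)
  exact le_moduleSocle (A ∙ y) (mem_span_singleton_self y)

lemma moduleSocle_eq_span : moduleSocle A M = span A {y | IsSimpleModule A (A ∙ y)} := by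
  refine le_antisymm (sSup_le fun W (hW : IsSimpleModule A W) y hy ↦ ?_) (span_le.mpr ?_)
  · rcases eq_or_ne y 0 with rfl | hy0
    · exact zero_mem _
    have hspan : A ∙ y = W := (isSimpleModule_iff_isAtom.mp hW).le_iff.mp
      ((span_singleton_le_iff_mem _ _).mpr hy) |>.resolve_left (by simpa using hy0)
    exact subset_span (hspan.symm ▸ hW : IsSimpleModule A (A ∙ y))
  · intro y (hy : IsSimpleModule A (A ∙ y))
    exact le_moduleSocle (A ∙ y) (mem_span_singleton_self y)

lemma exists_le_disjoint_sup_eq (U J : Submodule A M) [IsSemisimpleModule A U] :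
    ∃ T ≤ U, Disjoint T J ∧ T ⊔ J = U ⊔ J := by
  obtain ⟨T, hT⟩ := exists_isCompl (J.comap U.subtype)
  have hmap : (J.comap U.subtype).map U.subtype = U ⊓ J := map_comap_subtype U J
  refine ⟨T.map U.subtype, map_subtype_le U T, ?_, ?_⟩
  · have hdisj : Disjoint (T.map U.subtype) (U ⊓ J) :=
      hmap ▸ disjoint_map U.subtype_injective hT.disjoint.symm
    exact disjoint_iff_inf_le.mpr fun x hx ↦
      hdisj.le_bot ⟨hx.1, map_subtype_le U T hx.1, hx.2⟩
  · have hU : U ⊓ J ⊔ T.map U.subtype = U := by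
      rw [← hmap, ← Submodule.map_sup, hT.sup_eq_top, map_subtype_top]
    calc T.map U.subtype ⊔ J = U ⊓ J ⊔ T.map U.subtype ⊔ J := by
          rw [sup_comm (U ⊓ J), sup_assoc, sup_eq_right.mpr (inf_le_right : U ⊓ J ≤ J)]
      _ = U ⊔ J := by rw [hU]

/-- A transfinite sequence of submodules leading from `0` to `N (σ + 1) = M`, at each limit no
larger than the union of the previous terms, with semisimple sections, all but the bottom one
countably generated. The section `N (α + 1) / N α` is encoded as the image of `N (α + 1)` in
`M ⧸ N α`, and monotonicity is not part of the definition. It abstracts what the right and the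
left socle sequence have in common. -/
structure IsCountableLoewyFiltration (σ : Ordinal.{v}) (N : Ordinal.{v} → Submodule A M) :
    Prop where
  zero : N 0 = ⊥
  exists_lt_mem : ∀ o, Order.IsSuccLimit o → ∀ x ∈ N o, ∃ β < o, x ∈ N β
  top : N (σ + 1) = ⊤
  semisimple : ∀ α, IsSemisimpleModule A ((N (α + 1)).map (N α).mkQ)
  countable : ∀ α, 0 < α → α ≤ σ → IsCountablyGenerated ((N (α + 1)).map (N α).mkQ)

namespace IsCountableLoewyFiltration

variable {σ : Ordinal.{v}} {N : Ordinal.{v} → Submodule A M} {I : Submodule A M}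

lemma exists_le_inf_le_sup (hN : IsCountableLoewyFiltration σ N) (I : Submodule A M)
    {α : Ordinal.{v}} (h0 : 0 < α) (hα : α ≤ σ) :
    ∃ J ≤ I, IsCountablyGenerated J ∧ I ⊓ N (α + 1) ≤ J ⊔ N α := by
  have := hN.semisimple α
  have hsection : IsCountablyGenerated ((I ⊓ N (α + 1)).map (N α).mkQ) :=
    (hN.countable α h0 hα).of_le_of_isSemisimpleModule (map_mono inf_le_right)
  obtain ⟨J, hJ, hJcg, hJmap⟩ := hsection.exists_le_map_eq
  refine ⟨J, hJ.trans inf_le_left, hJcg, ?_⟩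
  calc I ⊓ N (α + 1) ≤ N α ⊔ J := by
        rw [← comap_map_mkQ, hJmap, ← map_le_iff_le_comap]
    _ = J ⊔ N α := sup_comm ..

lemma inf_le_inf_one_sup (hN : IsCountableLoewyFiltration σ N) {J : Submodule A M} (hJI : J ≤ I)
    (hJ : ∀ α, 0 < α → α ≤ σ → I ⊓ N (α + 1) ≤ J ⊔ N α) {α : Ordinal.{v}} (hα : α ≤ σ + 1) :
    I ⊓ N α ≤ I ⊓ N 1 ⊔ J := by
  induction α using Ordinal.limitRecOn with
  | zero => simp [hN.zero]
  | add_one α ih =>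
    have hασ : α ≤ σ := by simpa using hα
    rcases eq_or_ne α 0 with rfl | hne
    · simp
    calc I ⊓ N (α + 1) ≤ I ⊓ (J ⊔ N α) := le_inf inf_le_left (hJ α (pos_iff_ne_zero.mpr hne) hασ)
      _ = I ⊓ N α ⊔ J := by rw [inf_comm, sup_inf_assoc_of_le _ hJI, sup_comm, inf_comm]
      _ ≤ I ⊓ N 1 ⊔ J := sup_le (ih (hασ.trans (by simp))) le_sup_right
  | limit o ho ih =>
    intro x hx
    obtain ⟨β, hβ, hxβ⟩ := hN.exists_lt_mem o ho x hx.2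
    exact ih β hβ (hβ.le.trans hα) ⟨hx.1, hxβ⟩

lemma exists_isCountablyGenerated_sup_eq (hN : IsCountableLoewyFiltration σ N)
    (hσ : σ.card ≤ Cardinal.aleph0) (I : Submodule A M) :
    ∃ J, IsCountablyGenerated J ∧ I ⊓ N 1 ⊔ J = I := by
  have : Countable (Set.Iio σ) := by
    rwa [Set.countable_coe_iff, ← Cardinal.le_aleph0_iff_set_countable, Cardinal.mk_Iio_ordinal,
      Cardinal.lift_le_aleph0]
  have : Countable (Set.Ioc 0 σ) := by
    refine Set.Countable.mono ?_ (((Set.Iio σ).to_countable).insert σ)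
    rw [Set.Iio_insert]
    exact Set.Ioc_subset_Iic_self
  choose J hJI hJcg hJ using fun α : Set.Ioc 0 σ ↦ hN.exists_le_inf_le_sup I α.2.1 α.2.2
  have hsup : ⨆ α, J α ≤ I := iSup_le hJI
  refine ⟨⨆ α, J α, .iSup hJcg, le_antisymm (sup_le inf_le_left hsup) ?_⟩
  have hlayers (α : Ordinal.{v}) (h0 : 0 < α) (hα : α ≤ σ) :
      I ⊓ N (α + 1) ≤ (⨆ α, J α) ⊔ N α :=
    (hJ ⟨α, h0, hα⟩).trans (sup_le_sup_right (le_iSup J _) _)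
  simpa [hN.top] using hN.inf_le_inf_one_sup hsup hlayers le_rfl

lemma isSemisimpleModule_one (hN : IsCountableLoewyFiltration σ N) :
    IsSemisimpleModule A (N 1) := by
  have := hN.semisimple 0
  rw [zero_add] at this
  refine .of_injective ((N 0).mkQ.submoduleMap (N 1)) fun x y hxy ↦ Subtype.ext ?_
  have hmk : (N 0).mkQ x = (N 0).mkQ y := congrArg Subtype.val hxy
  simpa [Submodule.Quotient.eq, hN.zero, sub_eq_zero] using hmk

/-- The bottom section need not be countably generated; it is split off `I` as a semisimple
complement of the countably generated rest. -/
theorem projective (hN : IsCountableLoewyFiltration σ N) (hM : IsZelmanowitzRegular A M)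
    (hσ : σ.card ≤ Cardinal.aleph0) (I : Submodule A M) : Module.Projective A I := by
  have := hN.isSemisimpleModule_one
  have : IsSemisimpleModule A ↥(I ⊓ N 1) := isSemisimpleModule_of_le inf_le_right
  obtain ⟨J, hJ, hJI⟩ := hN.exists_isCountablyGenerated_sup_eq hσ I
  obtain ⟨T, hT, hdisj, hTJ⟩ := exists_le_disjoint_sup_eq (I ⊓ N 1) J
  have : IsSemisimpleModule A T := isSemisimpleModule_of_le hT
  have : Module.Projective A T := (hM.submodule T).projective_of_isSemisimpleModule
  have : Module.Projective A J := hM.projective_of_isCountablyGenerated hJ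
  rw [← hJI, ← hTJ]
  exact projective_sup_of_disjoint hdisj

end IsCountableLoewyFiltration

end RegularModules

section Rings

variable {R : Type u} [Ring R]

namespace IsVNRegular

lemma isZelmanowitzRegular_left (h : IsVNRegular R) : IsZelmanowitzRegular R R := fun x ↦
  let ⟨s, hs⟩ := h x
  ⟨LinearMap.toSpanSingleton R R s, hs⟩

lemma isZelmanowitzRegular_right (h : IsVNRegular R) : IsZelmanowitzRegular Rᵐᵒᵖ R := fun x ↦
  let ⟨s, hs⟩ := h x
  ⟨(MulOpposite.opLinearEquiv Rᵐᵒᵖ).toLinearMap ∘ₗ LinearMap.mulLeft Rᵐᵒᵖ s,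
    (mul_assoc x s x).symm.trans hs⟩

lemma mulOpposite (h : IsVNRegular R) : IsVNRegular Rᵐᵒᵖ := fun r ↦
  let ⟨s, hs⟩ := h r.unop
  ⟨.op s, MulOpposite.unop_injective <| by simpa [mul_assoc] using hs⟩

lemma of_surjective {T : Type v} [Ring T] (h : IsVNRegular R) {f : R →+* T}
    (hf : Surjective f) : IsVNRegular T := fun t ↦
  let ⟨r, hr⟩ := hf t
  let ⟨s, hs⟩ := h r
  ⟨f s, by rw [← hr, ← map_mul, ← map_mul, hs]⟩

lemma jacobson_eq_bot (h : IsVNRegular R) : Ring.jacobson R = ⊥ := by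
  refine (Submodule.eq_bot_iff _).mpr fun x hx ↦ ?_
  obtain ⟨s, hs⟩ := h x
  obtain ⟨z, hz⟩ : ∃ z, z * (1 - s * x) = 1 := by
    obtain ⟨z, hz⟩ := Ideal.mem_jacobson_iff.mp (Ideal.jacobson_bot (R := R).symm ▸ hx) (-s)
    refine ⟨z, sub_eq_zero.mp (Eq.trans ?_ (Ideal.mem_bot.mp hz))⟩
    noncomm_ring
  have hxe : x * (1 - s * x) = 0 := by rw [mul_sub, mul_one, ← mul_assoc, hs, sub_self]
  have hidem : (1 - s * x) * (1 - s * x) = 1 - s * x := by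
    rw [sub_mul, one_mul, mul_assoc, hxe, mul_zero, sub_zero]
  have he : 1 - s * x = 1 := calc
    1 - s * x = z * ((1 - s * x) * (1 - s * x)) := by rw [← mul_assoc, hz, one_mul]
    _ = 1 := by rw [hidem, hz]
  rwa [he, mul_one] at hxe

lemma isSemisimpleRing (h : IsVNRegular R) [IsArtinianRing R] : IsSemisimpleRing R :=
  IsArtinianRing.isSemisimpleRing_iff_jacobson.mpr h.jacobson_eq_bot

end IsVNRegular

lemma socleSeq_zero : socleSeq R 0 = ⊥ :=
  Ordinal.limitRecOn_zero ..

lemma socleSeq_add_one (α : Ordinal.{u}) : socleSeq R (α + 1) =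
    (moduleSocle Rᵐᵒᵖ (R ⧸ socleSeq R α)).comap (socleSeq R α).mkQ :=
  Ordinal.limitRecOn_add_one ..

lemma socleSeq_limit {o : Ordinal.{u}} (ho : Order.IsSuccLimit o) :
    socleSeq R o = ⨆ β, ⨆ _ : β < o, socleSeq R β :=
  Ordinal.limitRecOn_limit _ _ _ _ ho

lemma map_mkQ_socleSeq_add_one (α : Ordinal.{u}) : (socleSeq R (α + 1)).map (socleSeq R α).mkQ =
    moduleSocle Rᵐᵒᵖ (R ⧸ socleSeq R α) := by
  rw [socleSeq_add_one, map_comap_eq_of_surjective (mkQ_surjective _)]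

lemma socleSeq_mono : Monotone (socleSeq R) := fun α β h ↦ by
  induction β using Ordinal.limitRecOn with
  | zero => rw [nonpos_iff_eq_zero.mp h]
  | add_one β ih =>
    rcases h.eq_or_lt with rfl | h
    · exact le_rfl
    · rw [socleSeq_add_one]
      exact (ih (Order.lt_add_one_iff.mp h)).trans (le_comap_mkQ _ _)
  | limit o ho _ =>
    rcases h.eq_or_lt with rfl | h
    · exact le_rfl
    · rw [socleSeq_limit ho]
      exact le_iSup₂_of_le α h le_rfl

lemma exists_lt_mem_socleSeq {o : Ordinal.{u}} (ho : Order.IsSuccLimit o) {x : R}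
    (hx : x ∈ socleSeq R o) : ∃ β < o, x ∈ socleSeq R β := by
  have : Nonempty {β // β < o} := ⟨⟨0, ho.bot_lt⟩⟩
  have hdir : Directed (· ≤ ·) fun β : {β // β < o} ↦ socleSeq R β :=
    (socleSeq_mono.comp (Subtype.mono_coe _)).directed_le
  rw [socleSeq_limit ho, iSup_subtype', mem_iSup_of_directed _ hdir] at hx
  exact let ⟨β, hβ⟩ := hx; ⟨β, β.2, hβ⟩

lemma socleSeq_le_comap (f : R →ₗ[Rᵐᵒᵖ] R) (α : Ordinal.{u}) :
    socleSeq R α ≤ (socleSeq R α).comap f := by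
  induction α using Ordinal.limitRecOn with
  | zero => simp [socleSeq_zero]
  | add_one α ih =>
    rw [socleSeq_add_one]
    exact fun x hx ↦ moduleSocle_le_comap ((socleSeq R α).mapQ _ f ih) hx
  | limit o ho ih =>
    intro x hx
    obtain ⟨β, hβ, hxβ⟩ := exists_lt_mem_socleSeq ho hx
    exact socleSeq_mono hβ.le (ih β hβ hxβ)

lemma mul_mem_socleSeq_left (r : R) {α : Ordinal.{u}} {x : R} (hx : x ∈ socleSeq R α) :
    r * x ∈ socleSeq R α :=
  socleSeq_le_comap (.mulLeft Rᵐᵒᵖ r) α hx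

lemma mul_mem_socleSeq_right {α : Ordinal.{u}} {x : R} (hx : x ∈ socleSeq R α) (r : R) :
    x * r ∈ socleSeq R α :=
  (socleSeq R α).smul_mem (.op r) hx

lemma isCountablyGenerated_map_mkQ_of_layer {α : Ordinal.{u}}
    (h : IsCountablyGenerated (⊤ : Submodule Rᵐᵒᵖ (Layer R α))) :
    IsCountablyGenerated ((socleSeq R (α + 1)).map (socleSeq R α).mkQ) := by
  have hle : layerKer R α ≤ (socleSeq R α).comap (socleSeq R (α + 1)).subtype := le_rfl
  have hrange : (⊤ : Submodule Rᵐᵒᵖ (Layer R α)).map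
      ((layerKer R α).mapQ (socleSeq R α) (socleSeq R (α + 1)).subtype hle) =
      (socleSeq R (α + 1)).map (socleSeq R α).mkQ := by
    rw [Submodule.map_top, range_mapQ, range_subtype]
  exact hrange ▸ h.map _

lemma isCountableLoewyFiltration_socleSeq {σ : Ordinal.{u}} (hσ : socleSeq R (σ + 1) = ⊤)
    (hlayers : ∀ α : Ordinal.{u}, 0 < α → α < σ →
      IsCountablyGenerated (⊤ : Submodule Rᵐᵒᵖ (Layer R α))) :
    IsCountableLoewyFiltration σ (socleSeq R) where
  zero := socleSeq_zero
  exists_lt_mem _ ho _ hx := exists_lt_mem_socleSeq ho hx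
  top := hσ
  semisimple α := map_mkQ_socleSeq_add_one (R := R) α ▸ isSemisimpleModule_moduleSocle
  countable α h0 hα := by
    rcases hα.eq_or_lt with rfl | hlt
    · have hone : IsCountablyGenerated (⊤ : Submodule Rᵐᵒᵖ R) :=
        ⟨{1}, Set.countable_singleton 1,
          eq_top_iff.mpr fun x _ ↦ mem_span_singleton.mpr ⟨.op x, one_mul x⟩⟩
      exact hσ ▸ hone.map _
    · exact isCountablyGenerated_map_mkQ_of_layer (hlayers α h0 hlt)

/-- The term `S_α` of the right socle sequence, which is two-sided, as a left ideal. -/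
noncomputable def leftSocleSeq (R : Type u) [Ring R] (α : Ordinal.{u}) : Ideal R where
  toAddSubmonoid := (socleSeq R α).toAddSubmonoid
  smul_mem' r _ hx := mul_mem_socleSeq_left r hx

/-- The annihilator of a right module as a left ideal; it is two-sided, and its elements are
those of `rightAnnihilator R M`. -/
def annihilatorIdeal (R : Type u) [Ring R] (M : Type u) [AddCommGroup M] [Module Rᵐᵒᵖ M] :
    Ideal R where
  toAddSubmonoid := (rightAnnihilator R M).toAddSubmonoid
  smul_mem' r p hp m := by
    rw [smul_eq_mul, MulOpposite.op_mul, mul_smul]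
    exact hp _

section Annihilator

variable {M : Type u} [AddCommGroup M] [Module Rᵐᵒᵖ M]

instance : (annihilatorIdeal R M).IsTwoSided :=
  ⟨fun r hp ↦ (rightAnnihilator R M).smul_mem (.op r) hp⟩

lemma isArtinianRing_op_quotient_annihilatorIdeal (h : IsArtinian Rᵐᵒᵖ (R ⧸ rightAnnihilator R M)) :
    IsArtinianRing (R ⧸ annihilatorIdeal R M)ᵐᵒᵖ := by
  let q := Ideal.Quotient.mk (annihilatorIdeal R M)
  have hq : Surjective q.op := fun y ↦
    let ⟨r, hr⟩ := Ideal.Quotient.mk_surjective y.unop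
    ⟨.op r, MulOpposite.unop_injective hr⟩
  have : RingHomSurjective q.op := ⟨hq⟩
  let f : R →ₛₗ[q.op] (R ⧸ annihilatorIdeal R M)ᵐᵒᵖ :=
    { toFun r := .op (q r)
      map_add' a b := by rw [map_add, MulOpposite.op_add]
      map_smul' a b := by
        rw [MulOpposite.smul_eq_mul_unop, map_mul, MulOpposite.op_mul]
        rfl }
  have hker : rightAnnihilator R M = LinearMap.ker f := by
    ext r
    exact Ideal.Quotient.eq_zero_iff_mem.symm.trans (MulOpposite.op_eq_zero_iff (q r)).symm
  have hbij : Bijective ((rightAnnihilator R M).liftQ f hker.le) := by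
    refine ⟨LinearMap.ker_eq_bot.mp (ker_liftQ_eq_bot' _ f hker), fun y ↦ ?_⟩
    obtain ⟨r, hr⟩ := hq y
    exact ⟨(rightAnnihilator R M).mkQ r.unop, hr⟩
  exact (LinearMap.isArtinian_iff_of_bijective _ hbij).mp h

lemma IsVNRegular.isNoetherian_quotient_annihilatorIdeal (hR : IsVNRegular R)
    (h : IsArtinian Rᵐᵒᵖ (R ⧸ rightAnnihilator R M)) :
    IsNoetherian R (R ⧸ annihilatorIdeal R M) := by
  let q := Ideal.Quotient.mk (annihilatorIdeal R M)
  have := isArtinianRing_op_quotient_annihilatorIdeal h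
  have : IsSemisimpleRing (R ⧸ annihilatorIdeal R M) :=
    isSemisimpleRing_mulOpposite_iff.mp
      (hR.of_surjective (f := q) Ideal.Quotient.mk_surjective).mulOpposite.isSemisimpleRing
  have : RingHomSurjective q := ⟨Ideal.Quotient.mk_surjective⟩
  let e : (R ⧸ annihilatorIdeal R M) →ₛₗ[q] (R ⧸ annihilatorIdeal R M) :=
    { AddMonoidHom.id _ with
      map_smul' r := by
        rintro ⟨x⟩
        rfl }
  exact (e.isNoetherian_iff_of_bijective bijective_id).mpr inferInstance

end Annihilator

/-- The representatives `x` of the generators of the simple right submodules of `R / S_α`. -/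
def simpleGenerators (R : Type u) [Ring R] (α : Ordinal.{u}) : Set R :=
  {x | IsSimpleModule Rᵐᵒᵖ (Rᵐᵒᵖ ∙ (socleSeq R α).mkQ x)}

lemma socleSeq_add_one_eq_sup_span (α : Ordinal.{u}) :
    socleSeq R (α + 1) = socleSeq R α ⊔ span Rᵐᵒᵖ (simpleGenerators R α) := by
  have himage : (socleSeq R α).mkQ '' simpleGenerators R α =
      {y | IsSimpleModule Rᵐᵒᵖ (Rᵐᵒᵖ ∙ y)} :=
    Set.image_preimage_eq {y | IsSimpleModule Rᵐᵒᵖ (Rᵐᵒᵖ ∙ y)} (mkQ_surjective (socleSeq R α))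
  rw [socleSeq_add_one, moduleSocle_eq_span, ← himage, span_image, comap_map_mkQ]

lemma leftSocleSeq_add_one_eq_sup {α : Ordinal.{u}} {T : Set R}
    (hT : socleSeq R (α + 1) = socleSeq R α ⊔ span Rᵐᵒᵖ T) :
    leftSocleSeq R (α + 1) = leftSocleSeq R α ⊔ ⨆ x ∈ T, span R (Set.range (x * ·)) := by
  have hTS : T ⊆ socleSeq R (α + 1) := span_le.mp (hT ▸ le_sup_right)
  refine le_antisymm (fun y hy ↦ ?_) (sup_le (fun y hy ↦ ?_) (iSup₂_le fun x hx ↦ ?_))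
  · obtain ⟨a, ha, b, hb, rfl⟩ := mem_sup.mp (hT ▸ hy : y ∈ socleSeq R α ⊔ span Rᵐᵒᵖ T)
    refine add_mem (mem_sup_left ha) (mem_sup_right ?_)
    clear hy
    induction hb using closure_induction with
    | zero => exact zero_mem _
    | add _ _ _ _ hx hy => exact add_mem hx hy
    | smul_mem r x hx =>
      exact mem_iSup_of_mem x (mem_iSup_of_mem hx (subset_span ⟨r.unop, rfl⟩))
  · exact socleSeq_mono (by simp) hy
  · exact span_le.mpr fun _ ⟨r, hr⟩ ↦ hr ▸ mul_mem_socleSeq_right (hTS hx) r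

lemma mul_mem_socleSeq_of_mem_annihilatorIdeal {α : Ordinal.{u}} {x y p : R}
    (hp : p ∈ annihilatorIdeal R (Rᵐᵒᵖ ∙ (socleSeq R α).mkQ x))
    (hy : y ∈ span R (Set.range (x * ·))) : y * p ∈ socleSeq R α := by
  induction hy using span_induction with
  | mem y hy =>
    obtain ⟨r, rfl⟩ := hy
    have h := congrArg Subtype.val
      (hp ⟨(socleSeq R α).mkQ (x * r), mem_span_singleton.mpr ⟨.op r, rfl⟩⟩)
    exact (Submodule.Quotient.mk_eq_zero _).mp h
  | zero => rw [zero_mul]; exact zero_mem _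
  | add a b _ _ ha hb => rw [add_mul]; exact add_mem ha hb
  | smul r a _ ha => rw [smul_mul_assoc]; exact mul_mem_socleSeq_left r ha

lemma IsVNRegular.isCountablyGenerated_map_mkQ_span_range_mul (hR : IsVNRegular R)
    (hpfa : HasPFA R) {α : Ordinal.{u}} {x : R} (hx : x ∈ simpleGenerators R α) :
    IsCountablyGenerated
      ((span R (Set.range (x * ·))).map (leftSocleSeq R α).mkQ) := by
  set L := span R (Set.range (x * ·))
  set K := annihilatorIdeal R (Rᵐᵒᵖ ∙ (socleSeq R α).mkQ x)
  have := hR.isNoetherian_quotient_annihilatorIdeal (hpfa _ hx)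
  obtain ⟨J, hJL, hJ, hmap⟩ := IsCountablyGenerated.exists_le_map_eq
    (.of_fg (IsNoetherian.noetherian (L.map K.mkQ)))
  have hLK : L ⊓ K ≤ leftSocleSeq R α := fun y ⟨hyL, hyK⟩ ↦ by
    obtain ⟨z, hz⟩ := hR y
    rw [← hz, mul_assoc]
    exact mul_mem_socleSeq_of_mem_annihilatorIdeal (K.mul_mem_left z hyK) hyL
  have hLJ : L ≤ leftSocleSeq R α ⊔ J := by
    have hLKJ : L ≤ K ⊔ J := by rw [← comap_map_mkQ, hmap, ← map_le_iff_le_comap]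
    calc L ≤ L ⊓ (K ⊔ J) := le_inf le_rfl hLKJ
      _ = L ⊓ K ⊔ J := (inf_sup_assoc_of_le K hJL).symm
      _ ≤ leftSocleSeq R α ⊔ J := sup_le_sup_right hLK J
  have hLJmap : L.map (leftSocleSeq R α).mkQ = J.map (leftSocleSeq R α).mkQ :=
    le_antisymm (by rwa [map_le_iff_le_comap, comap_map_mkQ]) (map_mono hJL)
  exact hLJmap ▸ hJ.map _

lemma mem_socleSeq_of_mul_mem_socleSeq {α : Ordinal.{u}} {x r t : R}
    (hx : x ∈ simpleGenerators R α) (hrx : r * x ∉ socleSeq R α)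
    (ht : r * (x * t) ∈ socleSeq R α) : x * t ∈ socleSeq R α := by
  have : IsSimpleModule Rᵐᵒᵖ (Rᵐᵒᵖ ∙ (socleSeq R α).mkQ x) := hx
  let g : (R ⧸ socleSeq R α) →ₗ[Rᵐᵒᵖ] R ⧸ socleSeq R α :=
    mapQ _ _ (.mulLeft Rᵐᵒᵖ r) (socleSeq_le_comap _ α)
  rcases (g.domRestrict (Rᵐᵒᵖ ∙ (socleSeq R α).mkQ x)).injective_or_eq_zero with hinj | hzero
  · have hmem : (socleSeq R α).mkQ (x * t) ∈ Rᵐᵒᵖ ∙ (socleSeq R α).mkQ x :=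
      mem_span_singleton.mpr ⟨.op t, rfl⟩
    have h := (injective_iff_map_eq_zero _).mp hinj ⟨_, hmem⟩
      ((Submodule.Quotient.mk_eq_zero _).mpr ht)
    exact (Submodule.Quotient.mk_eq_zero _).mp (congrArg Subtype.val h)
  · have h := LinearMap.congr_fun hzero ⟨_, mem_span_singleton_self _⟩
    exact absurd ((Submodule.Quotient.mk_eq_zero _).mp h) hrx

lemma IsVNRegular.span_range_mul_le (hR : IsVNRegular R) {α : Ordinal.{u}} {x : R}
    (hx : x ∈ simpleGenerators R α) :
    span R (Set.range (x * ·)) ≤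
      (moduleSocle R (R ⧸ leftSocleSeq R α)).comap (leftSocleSeq R α).mkQ := by
  rw [span_le]
  rintro _ ⟨t, rfl⟩
  refine mem_moduleSocle_of_forall_mem_span fun r hr ↦ mem_span_singleton.mpr ?_
  have hrxt : r * (x * t) ∉ socleSeq R α := fun h ↦ hr ((Submodule.Quotient.mk_eq_zero _).mpr h)
  have hrx : r * x ∉ socleSeq R α := fun h ↦
    hrxt (mul_assoc r x t ▸ mul_mem_socleSeq_right h t)
  obtain ⟨z, hz⟩ := hR (r * (x * t))
  -- `x * (t - t * z * (r * (x * t)))` is killed by `r`, so it lies in `S_α` by simplicity.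
  have hkill : r * (x * (t - t * z * (r * (x * t)))) = 0 := by
    have hexpand : r * (x * (t - t * z * (r * (x * t)))) =
        r * (x * t) - r * (x * t) * z * (r * (x * t)) := by noncomm_ring
    rw [hexpand, hz, sub_self]
  have hmem := mem_socleSeq_of_mul_mem_socleSeq hx hrx (hkill ▸ zero_mem _)
  refine ⟨x * t * z, Eq.symm ((Submodule.Quotient.eq _).mpr ?_)⟩
  have hdiff : x * (t - t * z * (r * (x * t))) = x * t - x * t * z * (r * (x * t)) := by
    noncomm_ring
  exact (hdiff ▸ hmem :)

lemma IsVNRegular.isCountableLoewyFiltration_leftSocleSeq (hR : IsVNRegular R) (hpfa : HasPFA R)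
    {σ : Ordinal.{u}} (hright : IsCountableLoewyFiltration σ (socleSeq R)) :
    IsCountableLoewyFiltration σ (leftSocleSeq R) where
  zero := eq_bot_iff.mpr fun _ hx ↦ hright.zero.le hx
  exists_lt_mem := hright.exists_lt_mem
  top := eq_top_iff.mpr fun _ _ ↦ hright.top.ge mem_top
  semisimple α := by
    have := isSemisimpleModule_moduleSocle (A := R) (M := R ⧸ leftSocleSeq R α)
    refine isSemisimpleModule_of_le (V := moduleSocle R (R ⧸ leftSocleSeq R α)) ?_
    rw [leftSocleSeq_add_one_eq_sup (socleSeq_add_one_eq_sup_span α), map_le_iff_le_comap]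
    exact sup_le (le_comap_mkQ _ _) (iSup₂_le fun x ↦ hR.span_range_mul_le)
  countable α h0 hα := by
    have hsection := hright.countable α h0 hα
    rw [socleSeq_add_one_eq_sup_span, Submodule.map_sup, mkQ_map_self, bot_sup_eq] at hsection
    obtain ⟨T, hTsub, hTc, hT⟩ := hsection.exists_subset_sup_span_eq
    have := hTc.to_subtype
    rw [leftSocleSeq_add_one_eq_sup ((socleSeq_add_one_eq_sup_span α).trans hT.symm),
      Submodule.map_sup, mkQ_map_self, bot_sup_eq, iSup_subtype', Submodule.map_iSup]
    exact .iSup fun x : T ↦ hR.isCountablyGenerated_map_mkQ_span_range_mul hpfa (hTsub x.2)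

end Rings

/-- Lemma 9, (2) ⟹ (1), of the paper: a semiartinian von Neumann
regular ring with primitive factors artinian whose Loewy length `σ + 1` has `σ`
countable and whose proper layers are countably generated is left and right hereditary. -/
theorem hereditary_of_countable_layers (R : Type u) [Ring R]
    (hsa : IsRightSemiartinian R) (hvnr : IsVNRegular R) (hpfa : HasPFA R)
    (σ : Ordinal.{u}) (hσ : IsLeast {o : Ordinal.{u} | socleSeq R o = ⊤} (σ + 1))
    (hσc : σ.card ≤ Cardinal.aleph0)
    (hlayers : ∀ α : Ordinal.{u}, 0 < α → α < σ →
      ∃ S : Set (Layer R α), S.Countable ∧ Submodule.span Rᵐᵒᵖ S = ⊤) :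
    (∀ I : Submodule Rᵐᵒᵖ R, Module.Projective Rᵐᵒᵖ ↥I) ∧
    (∀ I : Ideal R, Module.Projective R ↥I) := by
  have hright : IsCountableLoewyFiltration σ (socleSeq R) :=
    isCountableLoewyFiltration_socleSeq hσ.1 hlayers
  have hleft : IsCountableLoewyFiltration σ (leftSocleSeq R) :=
    hvnr.isCountableLoewyFiltration_leftSocleSeq hpfa hright
  exact ⟨hright.projective hvnr.isZelmanowitzRegular_right hσc,
    hleft.projective hvnr.isZelmanowitzRegular_left hσc⟩
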